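/- Let Ψ : (0,∞) → (0,∞) and suppose there exist functions d : (0,∞) → (0,∞) and e : (0,∞) → (0,∞) such that Ψ(q) = d(q)/e(q) for all q, d(q), e(q) ∈ ℕ for all q ∈ ℕ, and e(q) ≡ 0 (mod q) for all q ∈ ℕ. If ω : (0,∞) → (0,∞) satisfies ω(q) < ((1 − ω(e(q)))/Ψ(q)) · Ψ(e(q)) for all sufficiently large q, then E(Ψ,ω) = ∅. -/

import Mathlib

/-!
Let `x ∈ E(Ψ, ω)`. Each denominator admits only finitely many numerators, so `x ∈ W(Ψ)` yields a
pair `(p, q)` with `q` as large as desired and `|x - p/q| ≤ Ψ q` (`exists_large_denominator`). Then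
`|x - p/q|` lies in `[(1 - ω q) Ψ q, Ψ q]`, so `x` is within `ω q * Ψ q` of one of the two endpoints
`p/q ± Ψ q`. As `Ψ q = d q / e q` and `q ∣ e q`, these endpoints are fractions with denominator
`e q`, and the hypothesis on `ω` gives `ω q * Ψ q < (1 - ω (e q)) * Ψ (e q)`. Since `e q ≥ q` is
also large, this contradicts the lower bound in `E(Ψ, ω)` at the denominator `e q`.
-/

open Filter Set

/-- A real number `x` is `Ψ`-approximable: `|x - p/q| ≤ Ψ q` for infinitely many
pairs `(p, q) ∈ ℤ × ℕ` (with `q > 0`).  `WSet Ψ` is the set `W(Ψ)` of such `x`. -/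
def WSet (Ψ : ℝ → ℝ) : Set ℝ :=
  {x : ℝ | {pq : ℤ × ℕ | 0 < pq.2 ∧ |x - (pq.1 : ℝ) / (pq.2 : ℝ)| ≤ Ψ (pq.2 : ℝ)}.Infinite}

/-- `ESet Ψ ω` is the set `E(Ψ, ω)` of `x ∈ W(Ψ)` such that for all sufficiently large
`q ∈ ℕ` one has `|x - p/q| ≥ (1 - ω q) * Ψ q` for every `p ∈ ℤ`. -/
def ESet (Ψ ω : ℝ → ℝ) : Set ℝ :=
  {x : ℝ | x ∈ WSet Ψ ∧ ∃ Q : ℕ, ∀ q : ℕ, Q ≤ q → ∀ p : ℤ,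
    (1 - ω (q : ℝ)) * Ψ (q : ℝ) ≤ |x - (p : ℝ) / (q : ℝ)|}

/-- A `Ψ`-approximable number has approximations with arbitrarily large denominator, because for
a fixed denominator only finitely many numerators occur. -/
lemma exists_large_denominator {Ψ : ℝ → ℝ} {x : ℝ} (hx : x ∈ WSet Ψ) (N : ℕ) :
    ∃ (p : ℤ) (q : ℕ), N ≤ q ∧ 0 < q ∧ |x - (p : ℝ) / (q : ℝ)| ≤ Ψ (q : ℝ) := by
  by_contra! hcon
  have hfin : (⋃ q ∈ Set.Iio N,
      Set.image (fun p : ℤ => (p, q)) (Set.Icc ⌊(x - Ψ q) * q⌋ ⌈(x + Ψ q) * q⌉)).Finite :=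
    (Set.finite_Iio N).biUnion fun q _ => (Set.finite_Icc _ _).image _
  refine hx (hfin.subset ?_)
  rintro ⟨p, q⟩ ⟨hq, hpq⟩
  dsimp only at hq hpq
  have hqN : q < N := by
    by_contra! h
    exact absurd hpq (not_le.mpr (hcon p q h hq))
  have hq' : (0 : ℝ) < q := by exact_mod_cast hq
  obtain ⟨h1, h2⟩ := abs_le.mp hpq
  have hlo : (x - Ψ q) * q ≤ p := (le_div_iff₀ hq').mp (by linarith)
  have hhi : (p : ℝ) ≤ (x + Ψ q) * q := (div_le_iff₀ hq').mp (by linarith)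
  refine Set.mem_biUnion (show q ∈ Set.Iio N from hqN) ⟨p, ⟨?_, ?_⟩, rfl⟩
  · exact_mod_cast (Int.floor_le _).trans hlo
  · exact_mod_cast hhi.trans (Int.le_ceil _)

/-- **Theorem.** Suppose `Ψ = d/e` on `(0,∞)` where `d(q), e(q)` are positive integers for
every `q ∈ ℕ`, and `e(q) ≡ 0 (mod q)` for all `q ∈ ℕ`.  If `ω : (0,∞) → (0,∞)` satisfies
`ω(q) < ((1 − ω(e(q)))/Ψ(q))·Ψ(e(q))` for all sufficiently large `q`, then `E(Ψ,ω) = ∅`. -/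
theorem ESet_eq_empty_of_rational' (Ψ ω d e : ℝ → ℝ)
    (hΨpos : ∀ q : ℝ, 0 < q → 0 < Ψ q)
    (hωpos : ∀ q : ℝ, 0 < q → 0 < ω q)
    (hdpos : ∀ q : ℝ, 0 < q → 0 < d q)
    (hepos : ∀ q : ℝ, 0 < q → 0 < e q)
    (hΨde : ∀ q : ℝ, 0 < q → Ψ q = d q / e q)
    (hdnat : ∀ q : ℕ, 0 < q → ∃ k : ℕ, d (q : ℝ) = (k : ℝ))
    (hediv : ∀ q : ℕ, 0 < q → ∃ k : ℕ, e (q : ℝ) = ((q * k : ℕ) : ℝ))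
    (hsmall : ∀ᶠ q : ℝ in Filter.atTop,
      ω q < (1 - ω (e q)) / Ψ q * Ψ (e q)) :
    ESet Ψ ω = ∅ := by
  rw [Set.eq_empty_iff_forall_notMem]
  rintro x ⟨hxW, Q, hQ⟩
  obtain ⟨R, hR⟩ := eventually_atTop.mp hsmall
  obtain ⟨p, q, hNq, hq, hle⟩ := exists_large_denominator hxW (max Q ⌈R⌉₊)
  have hQq : Q ≤ q := (le_max_left _ _).trans hNq
  have hRq : R ≤ q := (Nat.le_ceil R).trans (by exact_mod_cast (le_max_right _ _).trans hNq)
  have hq' : (0 : ℝ) < q := by exact_mod_cast hq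
  obtain ⟨m, hm⟩ := hdnat q hq
  obtain ⟨k, hk⟩ := hediv q hq
  have hkpos : 0 < k := by
    rcases Nat.eq_zero_or_pos k with rfl | h
    · have := hepos q hq'
      rw [hk] at this
      simp at this
    · exact h
  have hk' : (0 : ℝ) < k := by exact_mod_cast hkpos
  have hlow := hQ q hQq p
  have hΨq : Ψ q = m / ((q : ℝ) * k) := by
    rw [hΨde q hq', hm, hk]
    push_cast
    rfl
  have hω : ω q * Ψ q < (1 - ω ((q * k : ℕ) : ℝ)) * Ψ ((q * k : ℕ) : ℝ) := by
    have h := hR q hRq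
    rw [hk, div_mul_eq_mul_div, lt_div_iff₀ (hΨpos q hq')] at h
    exact h
  have hfar := hQ (q * k) (hQq.trans (Nat.le_mul_of_pos_right q hkpos))
  -- the endpoint `p/q ± Ψ q` on the same side of `p/q` as `x` is a fraction over `e q = q * k`
  rcases le_total 0 (x - (p : ℝ) / q) with hs | hs
  · have hend : ((p * k + m : ℤ) : ℝ) / ((q * k : ℕ) : ℝ) = p / q + Ψ q := by
      rw [hΨq]
      push_cast
      field_simp
    have h := hfar (p * k + m)
    rw [hend, abs_of_nonpos (by rw [abs_of_nonneg hs] at hle; linarith)] at h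
    rw [abs_of_nonneg hs] at hlow
    linarith
  · have hend : ((p * k - m : ℤ) : ℝ) / ((q * k : ℕ) : ℝ) = p / q - Ψ q := by
      rw [hΨq]
      push_cast
      field_simp
    have h := hfar (p * k - m)
    rw [hend, abs_of_nonneg (by rw [abs_of_nonpos hs] at hle; linarith)] at h
    rw [abs_of_nonpos hs] at hlow
    linarith
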